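/- Highest-weight-vector monomials in divided powers of f₀ and f₁: (1) in W₀, for all m ≥ 1, f₁^{(2m)} f₀^{(2m−1)} f₁^{(2m−2)} ⋯ f₁^{(2)} f₀^{(1)} (1 ⊗ e^{0·α}) = (−1)^m q^{3m²} e^{−mα}, and for all m ≥ 0, f₀^{(2m+1)} f₁^{(2m)} f₀^{(2m−1)} ⋯ f₁^{(2)} f₀^{(1)} (1 ⊗ e^{0·α}) = q^{(m+1)(m+2)} e^{(m+1)α}; (2) in W₁, for all m ≥ 1, f₀^{(2m)} f₁^{(2m−1)} f₀^{(2m−2)} ⋯ f₀^{(2)} f₁^{(1)} (1 ⊗ e^{0·α}e^{α/2}) = (−1)^m q^{m(m+2)} e^{mα}e^{α/2}, and for all m ≥ 0, f₁^{(2m+1)} f₀^{(2m)} f₁^{(2m−1)} ⋯ f₀^{(2)} f₁^{(1)} (1 ⊗ e^{0·α}e^{α/2}) = q^{3m(m+1)} e^{−(m+1)α}e^{α/2}. (In each product the divided-power exponents decrease by 1 at each step and the operators f₀, f₁ alternate.) -/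

import Mathlib

/-!
The chains reduce to two one-step formulas (`divpow_chf1`, `divpow_chf0`): if `2M + i = r`, then
`f₁^{(r)} e^{Mα} = (-q)^{r(r-1)/2} e^{(M-r)α}`, and if `2M + i = 1 - r`, then
`f₀^{(r)} e^{Mα} = q^{2r} (-q⁻¹)^{r(r-1)/2} e^{(M+r)α}`.

Both come from an exact formula for all iterates (`chf1_iterate`, `chf0_iterate`). Let `H_n` be the
coefficients of the creation half of the current, with `H_n = 0` for `n < 0`, and let `t = q²` for
`X⁻`, `t = q⁻²` for `X⁺`. Up to powers of `q` coming from `q^∂`, the `k`-th iterate applied to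
`e^{Mα}` is `[k]_t! · det (H_{c-2k+2+a+b})_{0 ≤ a,b < k}`, a Hankel determinant, where
`[k]_t! = ∏_{l<k} (1 + t + ⋯ + t^l)` and `c` is the index with which the first application gives
`H_c`. For `k = r = c + 1` the Hankel matrix is anti-triangular with ones on the antidiagonal, so
the determinant is a sign.

The inductive step has three ingredients.

* The annihilation half of a current is the algebra homomorphism `T : p_n ↦ p_n + d_n u^n` into
  `Λ_F[u]` (`DopF_genFamF`), a Taylor shift.
* `T H_n = H_n - (1+t) u H_{n-1} + t u² H_{n-2}` (`shiftHom_extZ`): the generating function of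
  `T H_n` and `(1 - uw)(1 - tuw) ∑ H_n w^n` satisfy the same first-order linear differential
  equation in `w`.
* Hence `T` of the `k × k` Hankel determinant is a minor of `P K Qᵀ`, where `K` is the next Hankel
  matrix and `P`, `Q` are unipotent bidiagonal, so it equals `∑ (tu)^s adj(K)_{s,p} u^p`
  (`det_second_difference`). Applying the creation half replaces `u^j` by the entry `K_{p,s}` with
  `p + s = j`, and `∑_s t^s (adj(K) K)_{s,s} = (1 + t + ⋯ + t^k) det K` (`hankel_step`).
-/

open MvPolynomial

noncomputable section

/-- The base field `F = ℚ(q)`. -/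
abbrev Fq : Type := RatFunc ℚ

/-- The indeterminate `q ∈ ℚ(q)`. -/
def qq : Fq := RatFunc.X

/-- `Λ_F = F[p₁,p₂,…]`, with the variable `X n` (for `n : ℕ+`) the power sum `p_n`. -/
abbrev LamF : Type := MvPolynomial ℕ+ Fq

/-- The power sum `p_n`. -/
def ppF (n : ℕ+) : LamF := X n

/-- The family `g` with generating function `∑_k g_k t^k = exp (∑_{n≥1} c n · p_n tⁿ/n)`,
characterized by `g 0 = 1` and the recursion obtained by differentiating:
`(k+1) · g (k+1) = ∑_{i=0}^{k} c (i+1) · p_{i+1} · g (k−i)`. -/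
def genFamF (c : ℕ → Fq) : ℕ → LamF
  | 0 => 1
  | (k+1) => (((k : Fq) + 1)⁻¹) •
      ∑ i ∈ Finset.range (k+1), c (i+1) • (ppF ⟨i+1, Nat.succ_pos i⟩ * genFamF c (k - i))
  decreasing_by exact Nat.lt_succ_of_le (Nat.sub_le k i)

/-- The complete homogeneous symmetric function `h_k`. -/
def hhF : ℕ → LamF := genFamF fun _ => 1

/-- The elementary symmetric function `e_k`. -/
def eeF : ℕ → LamF := genFamF fun n => (-1)^(n+1)

/-- `h` indexed by `ℤ` (zero in negative degrees). -/
def hZF (n : ℤ) : LamF := if 0 ≤ n then hhF n.toNat else 0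

/-- `e` indexed by `ℤ` (zero in negative degrees). -/
def eZF (n : ℤ) : LamF := if 0 ≤ n then eeF n.toNat else 0

/-- The creation coefficients of `X⁺(z)`:
`exp (∑ ((1+q^{2n})q^{−n}/n)·p_n·zⁿ) = ∑_k HpF k · z^k`. -/
def HpF : ℕ → LamF := genFamF fun n => (1 + qq ^ (2*n)) * (qq⁻¹) ^ n

/-- `HpF` indexed by `ℤ`. -/
def HZp (n : ℤ) : LamF := if 0 ≤ n then HpF n.toNat else 0

/-- The annihilation avatars for `X⁺(z)`: since
`(1+q^{2n})q^{−n}/n · a_n = q^{−n}·∂/∂p_n`, the coefficient of `z^{−j}` in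
`exp (−∑ ((1+q^{2n})q^{−n}/n)·a_n·z^{−n})` is `ApF j` with `p_i ↦ i·∂/∂p_i`
substituted, where `∑_k ApF k t^k = exp (−∑ q^{−n} p_n tⁿ/n)`. -/
def ApF : ℕ → LamF := genFamF fun n => -((qq⁻¹) ^ n)

/-- The creation coefficients of `X⁻(z)`:
`exp (−∑ ((1+q^{2n})/n)·p_n·zⁿ) = ∑_k HmF k · z^k`. -/
def HmF : ℕ → LamF := genFamF fun n => -(1 + qq ^ (2*n))

/-- `HmF` indexed by `ℤ`. -/
def HZm (n : ℤ) : LamF := if 0 ≤ n then HmF n.toNat else 0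

/-- The differential operator `∏_i (i·∂/∂p_i)^(α i)`. -/
def monOpF (α : ℕ+ →₀ ℕ) : Module.End Fq LamF :=
  ((α.support.sort (· ≤ ·)).map fun (i : ℕ+) =>
    (((i : ℕ) : Fq) • (pderiv i).toLinearMap) ^ (α i)).prod

/-- `f(∂) P`: substitute `p_i ↦ i·∂/∂p_i` in `f` and apply to `P`. -/
def DopF (f : LamF) (P : LamF) : LamF := ∑ α ∈ f.support, f.coeff α • monOpF α P

/-- Bound for the weighted degree of `P` (weight of `p_i` is `i`). -/
def wboundF (P : LamF) : ℕ := P.support.sup fun α => α.sum fun i k => (i : ℕ) * k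

/-- The level-one Fock space `W_i = Λ_F ⊗ F[ℤα]e^{iα/2}`, realized as `ℤ →₀ Λ_F`;
`Finsupp.single m P` represents `P·e^{mα}e^{iα/2}`. -/
abbrev W : Type := ℤ →₀ LamF

/-- The Drinfeld current component `X_n^+` on `W_i` (the parameter `i ∈ {0,1}` enters
through `z^∂ e^{mα}e^{iα/2} = z^{2m+i} e^{mα}e^{iα/2}`): the coefficient of `z^{−n−1}` in
`X⁺(z) = exp(∑((1+q^{2n})q^{−n}/n)a_{−n}zⁿ)·exp(−∑((1+q^{2n})q^{−n}/n)a_n z^{−n})·e^α z^∂`,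
i.e. `X_n^+(P·e^{mα}) = ∑_j HpF_{j−n−1−2m−i} · (ApF j)(∂) P · e^{(m+1)α}`
(only the finitely many `j ≤ wboundF P` contribute). -/
def Xp (i n : ℤ) (w : W) : W :=
  w.sum fun m P => Finsupp.single (m+1)
    (∑ j ∈ Finset.range (wboundF P + 1),
      HZp ((j : ℤ) - n - 1 - 2*m - i) * DopF (ApF j) P)

/-- The Drinfeld current component `X_n^-` on `W_i`: the coefficient of `z^{−n−1}` in
`X⁻(z) = exp(−∑((1+q^{2n})/n)a_{−n}zⁿ)·exp(∑((1+q^{2n})/n)a_n z^{−n})·e^{−α} z^{−∂}`,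
i.e. `X_n^-(P·e^{mα}) = ∑_j HmF_{j+2m+i−n−1} · h_j(∂) P · e^{(m−1)α}`
(here `(1+q^{2n})/n · a_n = ∂/∂p_n`, whose generating family is `h`). -/
def Xm (i n : ℤ) (w : W) : W :=
  w.sum fun m P => Finsupp.single (m-1)
    (∑ j ∈ Finset.range (wboundF P + 1),
      HZm ((j : ℤ) + 2*m + i - n - 1) * DopF (hhF j) P)

/-- The `q`-factorial `[r]! = ∏_{k=1}^r (q^k − q^{−k})/(q − q^{−1})`. -/
def qfact (r : ℕ) : Fq := ∏ k ∈ Finset.range r, (qq ^ (k+1) - (qq⁻¹) ^ (k+1)) / (qq - qq⁻¹)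

/-- The divided power `x^{(r)} = x^r / [r]!` of an operator on `W`. -/
def divpow (f : W → W) (r : ℕ) (w : W) : W := (qfact r)⁻¹ • (f^[r] w)

/-- Schur function of an integer tuple: `s_ρ = det (h_{ρ_i − i + j})`. -/
def schurF {l : ℕ} (ρ : Fin l → ℤ) : LamF :=
  (Matrix.of fun i j : Fin l => hZF (ρ i - (i.1 : ℤ) + (j.1 : ℤ))).det

/-- Dual Schur function of an integer tuple: `s_{ρ'} = det (e_{ρ_i − i + j})`. -/
def schurEF {l : ℕ} (ρ : Fin l → ℤ) : LamF :=
  (Matrix.of fun i j : Fin l => eZF (ρ i - (i.1 : ℤ) + (j.1 : ℤ))).det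

/-- `q^{±∂}`: `q^{ε∂}(P·e^{mα}e^{iα/2}) = q^{ε(2m+i)}·P·e^{mα}e^{iα/2}`. -/
def qd (i ε : ℤ) (w : W) : W := w.sum fun m P => Finsupp.single m (qq ^ (ε * (2*m + i)) • P)

/-- The Chevalley generator `e₁ = X₀⁺`. -/
def che1 (i : ℤ) : W → W := Xp i 0
/-- The Chevalley generator `f₁ = X₀⁻`. -/
def chf1 (i : ℤ) : W → W := Xm i 0
/-- The Chevalley generator `e₀ = X₁⁻ ∘ q^{−∂}`. -/
def che0 (i : ℤ) (w : W) : W := Xm i 1 (qd i (-1) w)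
/-- The Chevalley generator `f₀ = q^∂ ∘ X₋₁⁺`. -/
def chf0 (i : ℤ) (w : W) : W := qd i 1 (Xp i (-1) w)


/-- The alternating chain in `W₀`: `chainW0 k = f^{(k)} ⋯ f₁^{(2)} f₀^{(1)} (1 ⊗ e^{0·α})`,
where the divided-power exponents decrease by one at each step, the bottom operator is
`f₀^{(1)}`, and the operators alternate (`f₀` at odd steps, `f₁` at even steps). -/
def chainW0 : ℕ → W
  | 0 => Finsupp.single 0 (1 : LamF)
  | (k+1) => divpow (if 2 ∣ (k+1) then chf1 0 else chf0 0) (k+1) (chainW0 k)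

/-- The alternating chain in `W₁`: `chainW1 k = f^{(k)} ⋯ f₀^{(2)} f₁^{(1)} (1 ⊗ e^{0·α}e^{α/2})`,
with bottom operator `f₁^{(1)}` and alternating `f₁` (odd steps) and `f₀` (even steps). -/
def chainW1 : ℕ → W
  | 0 => Finsupp.single 0 (1 : LamF)
  | (k+1) => divpow (if 2 ∣ (k+1) then chf0 1 else chf1 1) (k+1) (chainW1 k)

/-! ### Hankel determinants -/

/-- The Hankel determinant `det (h_{b+i+j})_{0 ≤ i,j < k}` of a sequence indexed by `ℤ`. -/
def hankelDet {R : Type*} [CommRing R] (h : ℤ → R) (b : ℤ) (k : ℕ) : R :=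
  (Matrix.of fun i j : Fin k => h (b + (i : ℕ) + (j : ℕ))).det

/-- When `b = 1 - k` the Hankel matrix is anti-triangular with ones on the antidiagonal. -/
theorem hankelDet_triangular {R : Type*} [CommRing R] (h : ℤ → R) (h0 : h 0 = 1)
    (hneg : ∀ n < 0, h n = 0) (k : ℕ) :
    hankelDet h (1 - k) k = ∏ l ∈ Finset.range k, (-1 : R) ^ l := by
  induction k with
  | zero => simp [hankelDet]
  | succ k ih =>
    rw [Finset.prod_range_succ, ← ih, hankelDet, Matrix.det_succ_row_zero,
      Finset.sum_eq_single (Fin.last k)]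
    · have : (1 - ((k + 1 : ℕ) : ℤ) + ((0 : Fin (k+1)) : ℕ) + ((Fin.last k : Fin (k+1)) : ℕ)) = 0 := by
        simp
      rw [Matrix.of_apply, this, h0, mul_one, mul_comm, hankelDet]
      congr 2
      · ext i j
        simp only [Matrix.submatrix_apply, Matrix.of_apply, Fin.succAbove_last, Fin.val_succ,
          Fin.val_castSucc]
        congr 1
        push_cast
        ring
    · intro j _ hj
      have hlt : (j : ℕ) < k := Fin.val_lt_last hj
      rw [Matrix.of_apply, hneg _ (by simp; omega)]
      simp
    · simp

/-- The lower bidiagonal unipotent matrix with `-u` below the diagonal. -/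
def bidiag {R : Type*} [CommRing R] (u : R) (k : ℕ) : Matrix (Fin (k+1)) (Fin (k+1)) R :=
  Matrix.of fun i j => if i = j then 1 else if (i : ℕ) = j + 1 then -u else 0

theorem det_bidiag {R : Type*} [CommRing R] (u : R) (k : ℕ) : (bidiag u k).det = 1 := by
  rw [Matrix.det_of_isLowerTriangular]
  · simp [bidiag]
  · intro i j hij
    have h : i < j := hij
    have h' : (i : ℕ) < j := h
    simp only [bidiag, Matrix.of_apply]
    rw [if_neg h.ne, if_neg (by omega)]

theorem bidiag_mul_succ {R : Type*} [CommRing R] (u : R) (k : ℕ) (v : Fin (k+1) → R) (i : Fin k) :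
    ∑ j, bidiag u k i.succ j * v j = v i.succ - u * v i.castSucc := by
  have hne : i.succ ≠ i.castSucc := i.castSucc_lt_succ.ne'
  rw [← Finset.sum_subset (Finset.subset_univ {i.succ, i.castSucc}),
    Finset.sum_pair hne]
  · simp [bidiag, hne]
    ring
  · intro j _ hj
    simp only [Finset.mem_insert, Finset.mem_singleton, not_or] at hj
    have h2 : ¬ ((i : ℕ) = j) := fun h => hj.2 (Fin.ext (by simp [h]))
    simp [bidiag, h2, Ne.symm hj.1]

/-- The first column of the inverse of `bidiag u k` is `(1, u, u², …)`. -/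
theorem adjugate_bidiag_zero {R : Type*} [CommRing R] (u : R) (k : ℕ) (i : Fin (k+1)) :
    (bidiag u k).adjugate i 0 = u ^ (i : ℕ) := by
  have h1 : (bidiag u k).mulVec (fun i => u ^ (i : ℕ)) = Pi.single 0 1 := by
    ext i
    refine Fin.cases ?_ (fun i => ?_) i
    · simp [Matrix.mulVec, dotProduct, bidiag]
    · simp only [Matrix.mulVec, dotProduct]
      rw [bidiag_mul_succ]
      simp
      ring
  have h2 := congrArg (fun v => (bidiag u k).adjugate.mulVec v i) h1
  simp only [Matrix.mulVec_mulVec, Matrix.adjugate_mul, det_bidiag] at h2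
  simpa using h2.symm

/-- If `h` is replaced by its twisted second difference `(1 - uE)(1 - vE) h`, with `E` the shift
`n ↦ n - 1`, the `k × k` Hankel determinant becomes a bilinear expression in the adjugate of the
`(k+1) × (k+1)` Hankel matrix `K` of `h`: it is the `(0,0)` minor of
`bidiag u * K * (bidiag v)ᵀ`. -/
theorem det_second_difference {R : Type*} [CommRing R] (u v : R) (h : ℤ → R) (b : ℤ) (k : ℕ) :
    hankelDet (fun n => h n - (u + v) * h (n - 1) + u * v * h (n - 2)) (b + 2) k =
      ∑ p : Fin (k+1), ∑ s : Fin (k+1), v ^ (s : ℕ) *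
        (Matrix.of fun i j : Fin (k+1) => h (b + (i : ℕ) + (j : ℕ))).adjugate s p * u ^ (p : ℕ) := by
  set K := Matrix.of fun i j : Fin (k+1) => h (b + (i : ℕ) + (j : ℕ)) with hK
  have h1 : (bidiag u k * K * (bidiag v k).transpose).adjugate 0 0 =
      ∑ p : Fin (k+1), ∑ s : Fin (k+1), v ^ (s : ℕ) * K.adjugate s p * u ^ (p : ℕ) := by
    rw [Matrix.adjugate_mul_distrib, Matrix.adjugate_mul_distrib, ← Matrix.mul_assoc,
      Matrix.mul_apply]
    refine Finset.sum_congr rfl fun p _ => ?_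
    rw [Matrix.mul_apply, Finset.sum_mul]
    refine Finset.sum_congr rfl fun s _ => ?_
    rw [adjugate_bidiag_zero, ← Matrix.adjugate_transpose, Matrix.transpose_apply,
      adjugate_bidiag_zero]
  rw [← h1, Matrix.adjugate_fin_succ_eq_det_submatrix, hankelDet]
  simp only [Fin.val_zero, add_zero, pow_zero, one_mul]
  congr 1
  ext i j
  simp only [Matrix.submatrix_apply, Fin.succAbove_zero, Matrix.of_apply]
  rw [Matrix.mul_apply]
  have hc : ∀ x, (bidiag u k * K) i.succ x * (bidiag v k).transpose x j.succ
      = bidiag v k j.succ x * (K i.succ x - u * K i.castSucc x) := by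
    intro x
    rw [Matrix.mul_apply, bidiag_mul_succ u k (fun y => K y x), Matrix.transpose_apply, mul_comm]
  simp_rw [hc]
  rw [bidiag_mul_succ v k (fun x => K i.succ x - u * K i.castSucc x)]
  simp only [hK, Matrix.of_apply, Fin.val_succ, Fin.val_castSucc]
  push_cast
  have e1 : b + 2 + (i : ℤ) + j = b + (i + 1) + (j + 1) := by ring
  have e2 : b + 2 + (i : ℤ) + j - 1 = b + (i + 1) + j := by ring
  have e3 : b + 2 + (i : ℤ) + j - 2 = b + i + j := by ring
  have e4 : b + (i : ℤ) + (j + 1) = b + (i + 1) + j := by ring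
  rw [e2, e3, e4, e1]
  ring

/-- One application of a current to a Hankel determinant: the annihilation half is `T`, and the
creation half replaces `u^j` by `h (b + j)`. -/
theorem hankel_step {F R : Type*} [CommRing F] [CommRing R] [Algebra F R]
    (T : R →ₐ[F] Polynomial R) (h : ℤ → R) (t : R)
    (hT : ∀ n, T (h n) = Polynomial.C (h n) - (Polynomial.X + Polynomial.C t * Polynomial.X) * Polynomial.C (h (n - 1)) + Polynomial.X * (Polynomial.C t * Polynomial.X) * Polynomial.C (h (n - 2)))
    (k : ℕ) (b : ℤ) :
    (T (hankelDet h (b + 2) k)).sum (fun j a => h (b + j) * a) =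
      (∑ s ∈ Finset.range (k + 1), t ^ s) * hankelDet h b (k + 1) := by
  set K := Matrix.of fun i j : Fin (k+1) => h (b + (i : ℕ) + (j : ℕ)) with hK
  have hL : ∀ p : Polynomial R, p.sum (fun j a => h (b + j) * a) =
      Polynomial.lsum (fun j : ℕ => LinearMap.mulLeft R (h (b + j))) p := fun p => by
    simp [Polynomial.lsum_apply]
  have h1 : T (hankelDet h (b + 2) k) = ∑ p : Fin (k+1), ∑ s : Fin (k+1),
      Polynomial.C (t ^ (s : ℕ) * K.adjugate s p) * Polynomial.X ^ ((s : ℕ) + p) := by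
    have h2 : T (hankelDet h (b + 2) k) = hankelDet (fun n => Polynomial.C (h n) - (Polynomial.X + Polynomial.C t * Polynomial.X) * Polynomial.C (h (n - 1))
        + Polynomial.X * (Polynomial.C t * Polynomial.X) * Polynomial.C (h (n - 2))) (b + 2) k := by
      rw [hankelDet, AlgHom.map_det, hankelDet]
      congr 1
      ext1 i j
      simp only [AlgHom.mapMatrix_apply, Matrix.map_apply, Matrix.of_apply, hT]
    rw [h2, det_second_difference Polynomial.X (Polynomial.C t * Polynomial.X) (fun n => Polynomial.C (h n)) b k]
    have h3 : (Matrix.of fun i j : Fin (k+1) => (Polynomial.C (h (b + (i : ℕ) + (j : ℕ))) : Polynomial R)).adjugate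
        = (Polynomial.C : R →+* Polynomial R).mapMatrix K.adjugate := by
      rw [RingHom.map_adjugate]
      rfl
    refine Finset.sum_congr rfl fun p _ => Finset.sum_congr rfl fun s _ => ?_
    rw [h3, RingHom.mapMatrix_apply, Matrix.map_apply, map_mul, map_pow]
    ring
  rw [hL, h1]
  simp_rw [map_sum]
  rw [Finset.sum_comm, ← Fin.sum_univ_eq_sum_range (fun s => t ^ s), Finset.sum_mul]
  refine Finset.sum_congr rfl fun s _ => ?_
  have h4 : (K.adjugate * K) s s = K.det := by simp [Matrix.adjugate_mul]
  rw [show hankelDet h b (k+1) = K.det from rfl, ← h4, Matrix.mul_apply, Finset.mul_sum]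
  refine Finset.sum_congr rfl fun p _ => ?_
  rw [← hL, Polynomial.C_mul_X_pow_eq_monomial,
    Polynomial.sum_monomial_index _ _ (by simp), hK, Matrix.of_apply]
  push_cast
  rw [add_right_comm, add_assoc b]
  ring

/-! ### Constant-coefficient differential operators -/

/-- The operator `i·∂/∂p_i`. -/
def eulerOp (i : ℕ+) : Module.End Fq LamF := ((i : ℕ) : Fq) • (pderiv i).toLinearMap

theorem pderiv_comm' (i j : ℕ+) (P : LamF) : pderiv i (pderiv j P) = pderiv j (pderiv i P) := by
  have h : ⁅(pderiv i : Derivation Fq LamF LamF), (pderiv j : Derivation Fq LamF LamF)⁆ = 0 := by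
    refine MvPolynomial.derivation_ext fun k => ?_
    rw [Derivation.commutator_apply]
    simp [pderiv_X, Pi.single_apply, apply_ite]
  have h2 := congrArg (fun D => D P) h
  simp only [Derivation.commutator_apply, Derivation.zero_apply] at h2
  exact sub_eq_zero.mp h2

theorem eulerOp_comm (i j : ℕ+) : eulerOp i * eulerOp j = eulerOp j * eulerOp i := by
  refine LinearMap.ext fun P => ?_
  change ((i : ℕ) : Fq) • pderiv i (((j : ℕ) : Fq) • pderiv j P) =
    ((j : ℕ) : Fq) • pderiv j (((i : ℕ) : Fq) • pderiv i P)
  rw [Derivation.map_smul, Derivation.map_smul, pderiv_comm' i j, smul_comm]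

instance eulerAlg_comm : IsMulCommutative (Algebra.adjoin Fq (Set.range eulerOp)) :=
  Algebra.isMulCommutative_adjoin Fq (by
    rintro _ ⟨i, rfl⟩ _ ⟨j, rfl⟩
    exact eulerOp_comm i j)

/-- The algebra generated by the commuting operators `i·∂/∂p_i`. -/
abbrev EulerAlg : Type := Algebra.adjoin Fq (Set.range eulerOp)

open scoped IsMulCommutative in
instance : CommRing EulerAlg := inferInstance

open scoped IsMulCommutative in
/-- The substitution `p_i ↦ i·∂/∂p_i` as an algebra homomorphism. It is defined through the
commutative subalgebra `EulerAlg`, since `aeval` needs a commutative target. -/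
def opHom : LamF →ₐ[Fq] Module.End Fq LamF :=
  (Algebra.adjoin Fq (Set.range eulerOp)).val.comp
    (aeval fun i => (⟨eulerOp i, Algebra.subset_adjoin ⟨i, rfl⟩⟩ : EulerAlg))

theorem opHom_X (i : ℕ+) : opHom (X i) = eulerOp i := by
  simp [opHom]

theorem opHom_monomial (α : ℕ+ →₀ ℕ) : opHom (monomial α 1) = monOpF α := by
  have h : (monomial α (1 : Fq) : LamF) =
      ((α.support.sort (· ≤ ·)).map fun i => (X i : LamF) ^ α i).prod := by
    rw [((Finset.sort_perm_toList α.support (· ≤ ·)).map _).prod_eq, Finset.prod_map_toList,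
      monomial_eq, C_1, one_mul]
    rfl
  rw [h, map_list_prod, List.map_map, monOpF]
  congr 2
  ext1 i
  rw [Function.comp_apply, map_pow, opHom_X]
  rfl

theorem DopF_eq (f P : LamF) : DopF f P = opHom f P := by
  conv_rhs => rw [f.as_sum]
  rw [map_sum, LinearMap.sum_apply, DopF]
  refine Finset.sum_congr rfl fun α _ => ?_
  rw [← opHom_monomial, ← LinearMap.smul_apply, ← map_smul, smul_monomial, smul_eq_mul, mul_one]

theorem genFamF_succ (c : ℕ → Fq) (k : ℕ) : genFamF c (k+1) = (((k : Fq) + 1)⁻¹) •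
    ∑ i ∈ Finset.range (k+1), c (i+1) • (X (Nat.succPNat i) * genFamF c (k - i)) := by
  rw [genFamF]
  rfl

theorem DopF_zero (c : ℕ → Fq) (P : LamF) : DopF (genFamF c 0) P = P := by
  rw [DopF_eq, genFamF, map_one]
  rfl

/-- The recursion defining `genFamF`, transported to operators. -/
theorem DopF_succ (c : ℕ → Fq) (k : ℕ) (P : LamF) :
    ((k : Fq) + 1) • DopF (genFamF c (k+1)) P = ∑ i ∈ Finset.range (k+1),
      (c (i+1) * ((i : Fq) + 1)) • pderiv (Nat.succPNat i) (DopF (genFamF c (k - i)) P) := by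
  have hk : (k : Fq) + 1 ≠ 0 := Nat.cast_add_one_ne_zero k
  simp only [DopF_eq]
  rw [genFamF_succ, map_smul, map_sum, LinearMap.smul_apply, smul_smul, mul_inv_cancel₀ hk, one_smul,
    LinearMap.sum_apply]
  refine Finset.sum_congr rfl fun i _ => ?_
  rw [map_smul, map_mul, LinearMap.smul_apply, mul_smul, opHom_X, Module.End.mul_apply,
    eulerOp, LinearMap.smul_apply]
  congr 2

/-! ### The annihilation half as a Taylor shift -/

/-- The algebra homomorphism `p_n ↦ p_n + d_n uⁿ` from `Λ_F` to `Λ_F[u]`, that is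
`exp (∑ d_n uⁿ ∂/∂p_n)`. -/
def shiftHom (d : ℕ → Fq) : LamF →ₐ[Fq] Polynomial LamF :=
  aeval fun n : ℕ+ => Polynomial.C (X n) + Polynomial.C (C (d n)) * Polynomial.X ^ (n : ℕ)

theorem shiftHom_X (d : ℕ → Fq) (n : ℕ+) : shiftHom d (X n) =
    Polynomial.C (X n) + Polynomial.C (C (d n)) * Polynomial.X ^ (n : ℕ) := by
  simp [shiftHom]

theorem shiftHom_C (d : ℕ → Fq) (a : Fq) : shiftHom d (C a) = Polynomial.C (C a) := by
  rw [shiftHom, aeval_C]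
  rfl

theorem coeff_shiftHom_mul_X (d : ℕ → Fq) (P : LamF) (n : ℕ+) (k : ℕ) :
    (shiftHom d (P * X n)).coeff k = (shiftHom d P).coeff k * X n +
      if (n : ℕ) ≤ k then d n • (shiftHom d P).coeff (k - n) else 0 := by
  rw [map_mul, shiftHom_X, mul_add, Polynomial.coeff_add, Polynomial.coeff_mul_C, ← mul_assoc,
    Polynomial.coeff_mul_X_pow', Polynomial.coeff_mul_C, mul_comm _ (C (d n)), ← smul_eq_C_mul]

/-- The shift solves the differential equation `d/du = ∑ n d_n u^{n-1} ∂/∂p_n`; in coefficients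
this is the recursion `DopF_succ`. -/
theorem coeff_shiftHom_succ (d : ℕ → Fq) (P : LamF) (k : ℕ) :
    ((k : Fq) + 1) • (shiftHom d P).coeff (k+1) = ∑ i ∈ Finset.range (k+1),
      (d (i+1) * ((i : Fq) + 1)) •
        pderiv (Nat.succPNat i) ((shiftHom d P).coeff (k - i)) := by
  induction P using MvPolynomial.induction_on generalizing k with
  | C a =>
    rw [shiftHom_C, Polynomial.coeff_C_succ, smul_zero]
    refine (Finset.sum_eq_zero fun i _ => ?_).symm
    rw [Polynomial.coeff_C]
    split_ifs <;> simp
  | add p q hp hq =>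
    simp only [map_add, Polynomial.coeff_add, smul_add, hp, hq, Finset.sum_add_distrib]
  | mul_X P n ih =>
    simp only [coeff_shiftHom_mul_X]
    -- Leibniz splits each summand: `∂` hits the old factor, the new variable `p_n`, or the
    -- old factor in the part shifted by `uⁿ`.
    have hterm : ∀ i ∈ Finset.range (k+1), (d (i+1) * ((i : Fq) + 1)) •
        pderiv (Nat.succPNat i) ((shiftHom d P).coeff (k - i) * X n +
          if (n : ℕ) ≤ k - i then d n • (shiftHom d P).coeff (k - i - n) else 0) =
        ((d (i+1) * ((i : Fq) + 1)) •
          pderiv (Nat.succPNat i) ((shiftHom d P).coeff (k - i))) * X n +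
        (if i + 1 = (n : ℕ) then (d n * (n : ℕ)) • (shiftHom d P).coeff (k + 1 - n) else 0) +
        if (n : ℕ) ≤ k - i then d n • ((d (i+1) * ((i : Fq) + 1)) •
          pderiv (Nat.succPNat i) ((shiftHom d P).coeff (k - n - i))) else 0 := by
      intro i _
      have e1 : k - i - (n : ℕ) = k - n - i := by omega
      rw [map_add, Derivation.leibniz, pderiv_X, smul_add, smul_add, e1, smul_eq_mul, smul_eq_mul]
      congr 1
      · rw [add_comm]
        congr 1
        · rw [mul_comm (X n), smul_mul_assoc]
        · by_cases h : i + 1 = (n : ℕ)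
          · have h' : n = (Nat.succPNat i) := PNat.eq h.symm
            subst h'
            simp
          · have h' : ¬ (n = Nat.succPNat i) := fun e => h (by rw [e]; rfl)
            rw [if_neg h, Pi.single_apply, if_neg h', mul_zero, smul_zero]
      · split_ifs
        · rw [Derivation.map_smul, smul_comm]
        · simp
    rw [Finset.sum_congr rfl hterm, Finset.sum_add_distrib, Finset.sum_add_distrib,
      ← Finset.sum_mul, ← ih, smul_add, smul_mul_assoc, add_assoc]
    congr 1
    have hn : 0 < (n : ℕ) := n.pos
    rcases lt_trichotomy (n : ℕ) (k + 1) with h | h | h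
    · obtain ⟨l, hl⟩ : ∃ l, k = n + l := ⟨k - n, by omega⟩
      have e2 : k + 1 - (n : ℕ) = l + 1 := by omega
      have e3 : k - (n : ℕ) = l := by omega
      rw [if_pos h.le, e2, e3, ← Finset.sum_filter, ← Finset.sum_filter]
      have e4 : (Finset.range (k+1)).filter (fun i => i + 1 = (n : ℕ)) = {(n : ℕ) - 1} := by
        ext i
        simp
        omega
      have e5 : (Finset.range (k+1)).filter (fun i => (n : ℕ) ≤ k - i) = Finset.range (l+1) := by
        ext i
        simp
        omega
      rw [e4, e5, Finset.sum_singleton, ← Finset.smul_sum, ← ih, smul_smul, smul_smul, ← add_smul]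
      congr 1
      rw [hl]
      push_cast
      ring
    · rw [if_pos h.le, Finset.sum_eq_single k, if_pos h.symm, Finset.sum_eq_zero, add_zero,
        smul_smul, h]
      · push_cast
        rw [mul_comm]
      · intro i _
        rw [if_neg (by omega)]
      · intro i _ hi
        rw [if_neg (by omega)]
      · simp
    · rw [if_neg (by omega), smul_zero, Finset.sum_eq_zero, Finset.sum_eq_zero, add_zero]
      · intro i _
        rw [if_neg (by omega)]
      · intro i hi
        have := Finset.mem_range.mp hi
        rw [if_neg (by omega)]

theorem coeff_zero_shiftHom (d : ℕ → Fq) (P : LamF) : (shiftHom d P).coeff 0 = P := by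
  induction P using MvPolynomial.induction_on with
  | C a => rw [shiftHom_C, Polynomial.coeff_C_zero]
  | add p q hp hq => rw [map_add, Polynomial.coeff_add, hp, hq]
  | mul_X P n ih =>
    rw [coeff_shiftHom_mul_X, ih, if_neg (by have := n.pos; omega), add_zero]

theorem DopF_genFamF (d : ℕ → Fq) (k : ℕ) (P : LamF) :
    DopF (genFamF d k) P = (shiftHom d P).coeff k := by
  induction k using Nat.strong_induction_on with
  | _ k ih =>
    rcases k with _ | k
    · rw [DopF_zero, coeff_zero_shiftHom]
    · have hk : (k : Fq) + 1 ≠ 0 := Nat.cast_add_one_ne_zero k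
      refine smul_right_injective LamF hk ?_
      simp only
      rw [DopF_succ, coeff_shiftHom_succ]
      refine Finset.sum_congr rfl fun i _ => ?_
      rw [ih (k - i) (by omega)]

theorem natDegree_shiftHom_le (d : ℕ → Fq) (P : LamF) :
    (shiftHom d P).natDegree ≤ wboundF P := by
  rw [shiftHom, aeval_def, eval₂_eq]
  refine Polynomial.natDegree_sum_le_of_forall_le _ _ fun α hα => ?_
  refine le_trans ?_ (Finset.le_sup (f := fun α : ℕ+ →₀ ℕ => α.sum fun i k => (i : ℕ) * k) hα)
  refine (Polynomial.natDegree_C_mul_le (C (coeff α P)) _).trans ?_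
  refine (Polynomial.natDegree_prod_le _ _).trans (Finset.sum_le_sum fun i _ => ?_)
  refine Polynomial.natDegree_pow_le.trans ?_
  rw [mul_comm]
  refine Nat.mul_le_mul_right _ ?_
  refine (Polynomial.natDegree_add_le _ _).trans (max_le (by simp) ?_)
  exact Polynomial.natDegree_C_mul_X_pow_le _ _

theorem sum_DopF (d : ℕ → Fq) (P : LamF) (h : ℕ → LamF) :
    ∑ j ∈ Finset.range (wboundF P + 1), h j * DopF (genFamF d j) P =
      (shiftHom d P).sum fun j a => h j * a := by
  rw [Polynomial.sum_over_range' _ (by simp) (wboundF P + 1)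
    (Nat.lt_succ_of_le (natDegree_shiftHom_le d P))]
  simp only [DopF_genFamF]

theorem Xm_single (i n m : ℤ) (P : LamF) : Xm i n (Finsupp.single m P) =
    Finsupp.single (m-1) ((shiftHom (fun _ => 1) P).sum fun j a =>
      HZm ((j : ℤ) + 2*m + i - n - 1) * a) := by
  unfold Xm hhF
  simp only [sum_DopF _ _ (fun j : ℕ => HZm ((j : ℤ) + 2*_ + i - n - 1))]
  rw [Finsupp.sum_single_index]
  simp

theorem Xp_single (i n m : ℤ) (P : LamF) : Xp i n (Finsupp.single m P) =
    Finsupp.single (m+1) ((shiftHom (fun n => -((qq⁻¹) ^ n)) P).sum fun j a =>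
      HZp ((j : ℤ) - n - 1 - 2*m - i) * a) := by
  unfold Xp ApF
  simp only [sum_DopF _ _ (fun j : ℕ => HZp ((j : ℤ) - n - 1 - 2*_ - i))]
  rw [Finsupp.sum_single_index]
  simp

/-! ### The shift of the creation coefficients -/

/-- The defining recursion of `genFamF` as a differential equation for its generating function. -/
theorem genFamF_ode {B : Type*} [CommRing B] [Algebra Fq B] (c : ℕ → Fq) (φ : LamF →ₐ[Fq] B) :
    PowerSeries.derivative B (PowerSeries.mk fun k => φ (genFamF c k)) =
      PowerSeries.mk (fun i => c (i+1) • φ (X (Nat.succPNat i))) *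
        PowerSeries.mk fun k => φ (genFamF c k) := by
  ext k
  have hk : (k : Fq) + 1 ≠ 0 := Nat.cast_add_one_ne_zero k
  rw [PowerSeries.coeff_derivative, PowerSeries.coeff_mk, PowerSeries.coeff_mul,
    Finset.Nat.sum_antidiagonal_eq_sum_range_succ_mk, genFamF_succ, map_smul, map_sum]
  have e : ((k : B) + 1) = algebraMap Fq B ((k : Fq) + 1) := by simp
  rw [e, mul_comm, ← Algebra.smul_def, smul_smul, mul_inv_cancel₀ hk, one_smul]
  refine Finset.sum_congr rfl fun i _ => ?_
  rw [map_smul, map_mul, PowerSeries.coeff_mk, PowerSeries.coeff_mk, smul_mul_assoc]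

theorem ode_unique {B : Type*} [CommRing B] [Algebra Fq B] (b x y : PowerSeries B)
    (hx : PowerSeries.derivative B x = b * x) (hy : PowerSeries.derivative B y = b * y)
    (h0 : PowerSeries.coeff 0 x = PowerSeries.coeff 0 y) : x = y := by
  ext k
  induction k using Nat.strong_induction_on with
  | _ k ih =>
    rcases k with _ | k
    · exact h0
    · have h1 := congrArg (PowerSeries.coeff k) hx
      have h2 := congrArg (PowerSeries.coeff k) hy
      rw [PowerSeries.coeff_derivative, PowerSeries.coeff_mul] at h1 h2
      have h3 : PowerSeries.coeff (k+1) x * ((k : B) + 1) =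
          PowerSeries.coeff (k+1) y * ((k : B) + 1) := by
        rw [h1, h2]
        refine Finset.sum_congr rfl fun p hp => ?_
        rw [ih p.2 (by have := Finset.HasAntidiagonal.mem_antidiagonal.mp hp; omega)]
      have hk : (k : Fq) + 1 ≠ 0 := Nat.cast_add_one_ne_zero k
      have e : ((k : B) + 1) = algebraMap Fq B ((k : Fq) + 1) := by simp
      have hu : IsUnit ((k : B) + 1) := by
        rw [e]
        exact (isUnit_iff_ne_zero.mpr hk).map _
      exact hu.mul_right_cancel h3

/-- Multiplying a solution of `x' = b x` by `1 - sw` subtracts `s / (1 - sw)` from `b`. -/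
theorem ode_mul_one_sub {B : Type*} [CommRing B] (s : B) (b x : PowerSeries B)
    (hx : PowerSeries.derivative B x = b * x) :
    PowerSeries.derivative B ((1 - PowerSeries.C s * PowerSeries.X) * x) =
      (b - PowerSeries.mk fun i => s ^ (i+1)) * ((1 - PowerSeries.C s * PowerSeries.X) * x) := by
  have hg : (PowerSeries.mk fun i => s ^ (i+1)) * (1 - PowerSeries.C s * PowerSeries.X)
      = PowerSeries.C s := by
    ext k
    rw [mul_sub, mul_one, mul_comm (PowerSeries.C s), ← mul_assoc, map_sub]
    rcases k with _ | k
    · simp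
    · rw [PowerSeries.coeff_mul_C, PowerSeries.coeff_succ_mul_X]
      simp [pow_succ]
  have hd : PowerSeries.derivative B (1 - PowerSeries.C s * PowerSeries.X) = - PowerSeries.C s := by
    simp [Derivation.leibniz]
  rw [Derivation.leibniz, hd, hx, sub_mul, ← mul_assoc (PowerSeries.mk _), hg]
  simp only [smul_eq_mul]
  ring

/-- Extension of a sequence by zero to negative indices, as in `HZp` and `HZm`. -/
def extZ (g : ℕ → LamF) (n : ℤ) : LamF := if 0 ≤ n then g n.toNat else 0

/-- Coefficients of `(1 - sw) x`, with coefficients extended by zero to `ℤ`. -/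
theorem coeff_one_sub_mul {B : Type*} [CommRing B] (s : B) (x : PowerSeries B) (z : ℤ → B)
    (hx : ∀ n : ℤ, z n = if 0 ≤ n then PowerSeries.coeff n.toNat x else 0) (n : ℤ) :
    z n - s * z (n - 1) = if 0 ≤ n then
      PowerSeries.coeff n.toNat ((1 - PowerSeries.C s * PowerSeries.X) * x) else 0 := by
  rcases lt_or_ge n 0 with h | h
  · rw [hx, hx, if_neg (by omega), if_neg (by omega), if_neg (by omega)]
    simp
  · lift n to ℕ using h
    have e : (1 - PowerSeries.C s * PowerSeries.X) * x = x - PowerSeries.C s * x * PowerSeries.X := by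
      ring
    rw [if_pos (by omega), e, map_sub, hx, hx, if_pos (by omega)]
    rcases n with _ | n
    · simp
    · rw [if_pos (by push_cast; omega)]
      simp only [Int.toNat_natCast, PowerSeries.coeff_succ_mul_X, PowerSeries.coeff_C_mul]
      congr 4
      omega

/-- The hypothesis `c_n d_n = -(1 + tⁿ)` says that the contraction factor
`exp (∑ c_n d_n (uw)ⁿ / n)` equals `(1 - uw)(1 - tuw)`. -/
theorem shiftHom_extZ (c d : ℕ → Fq) (t : Fq) (hcd : ∀ n, c (n+1) * d (n+1) = -(1 + t ^ (n+1)))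
    (n : ℤ) : shiftHom d (extZ (genFamF c) n) =
      Polynomial.C (extZ (genFamF c) n)
        - (Polynomial.X + Polynomial.C (C t) * Polynomial.X) *
          Polynomial.C (extZ (genFamF c) (n - 1))
        + Polynomial.X * (Polynomial.C (C t) * Polynomial.X) *
          Polynomial.C (extZ (genFamF c) (n - 2)) := by
  set u : Polynomial LamF := Polynomial.X
  set v : Polynomial LamF := Polynomial.C (C t) * Polynomial.X with hv
  have hG := genFamF_ode c (Polynomial.CAlgHom : LamF →ₐ[Fq] Polynomial LamF)
  set G := PowerSeries.mk fun k => (Polynomial.CAlgHom : LamF →ₐ[Fq] Polynomial LamF) (genFamF c k)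
    with hGdef
  have hT := genFamF_ode c (shiftHom d)
  have hGuv := ode_mul_one_sub v _ _ (ode_mul_one_sub u _ _ hG)
  have hb : PowerSeries.mk (fun i => c (i+1) • shiftHom d (X (Nat.succPNat i))) =
      PowerSeries.mk (fun i => c (i+1) • (Polynomial.CAlgHom : LamF →ₐ[Fq] Polynomial LamF)
        (X (Nat.succPNat i))) - (PowerSeries.mk fun i => u ^ (i+1)) -
        PowerSeries.mk fun i => v ^ (i+1) := by
    ext1 i
    simp only [map_sub, PowerSeries.coeff_mk]
    rw [shiftHom_X, smul_add, sub_sub, sub_eq_add_neg, Polynomial.CAlgHom_apply]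
    congr 1
    rw [← smul_mul_assoc, Polynomial.smul_C, smul_eq_C_mul, ← C_mul, Nat.succPNat_coe,
      Nat.succ_eq_add_one, hcd, hv, mul_pow, ← map_pow, ← map_pow]
    simp only [map_neg, map_add, map_one, map_pow]
    ring
  rw [← hb] at hGuv
  have hfin := ode_unique _ _ _ hT hGuv (by
    simp [hGdef, genFamF])
  have hz : ∀ n : ℤ, Polynomial.C (extZ (genFamF c) n) =
      if 0 ≤ n then PowerSeries.coeff n.toNat G else 0 := by
    intro n
    rw [extZ]
    split_ifs
    · simp [hGdef]
    · simp
  have h1 := coeff_one_sub_mul u G (fun n => Polynomial.C (extZ (genFamF c) n)) hz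
  have h2 := coeff_one_sub_mul v _ (fun n => Polynomial.C (extZ (genFamF c) n)
    - u * Polynomial.C (extZ (genFamF c) (n - 1))) h1 n
  rw [← hfin] at h2
  have h3 : shiftHom d (extZ (genFamF c) n) = if 0 ≤ n then PowerSeries.coeff n.toNat
      (PowerSeries.mk fun k => shiftHom d (genFamF c k)) else 0 := by
    rw [extZ]
    split_ifs <;> simp
  rw [h3, ← h2]
  rw [show n - 1 - 1 = n - 2 by ring]
  ring

/-! ### `q`-integers -/

theorem qq_ne_zero : qq ≠ 0 := RatFunc.X_ne_zero

theorem qq_pow_ne_one (n : ℕ) : qq ^ (n+1) ≠ 1 := by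
  intro h
  have h2 : (algebraMap (Polynomial ℚ) (RatFunc ℚ)) (Polynomial.X ^ (n+1)) =
      algebraMap (Polynomial ℚ) (RatFunc ℚ) 1 := by
    rw [map_pow, RatFunc.algebraMap_X, map_one]
    exact h
  have h3 := congrArg Polynomial.natDegree (RatFunc.algebraMap_injective ℚ h2)
  simp at h3

/-- The `q`-integer `[l+1]`. -/
def qint (l : ℕ) : Fq := (qq ^ (l+1) - (qq⁻¹) ^ (l+1)) / (qq - qq⁻¹)

theorem qq_sub_inv_ne_zero (l : ℕ) : qq ^ (l+1) - (qq⁻¹) ^ (l+1) ≠ 0 := by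
  have h0 : qq ^ (l+1) ≠ 0 := pow_ne_zero _ qq_ne_zero
  intro h
  have h1 : qq ^ (l+1) * qq ^ (l+1) = 1 := by
    rw [sub_eq_zero, inv_pow] at h
    nth_rewrite 1 [h]
    exact inv_mul_cancel₀ h0
  rw [← pow_add] at h1
  exact qq_pow_ne_one (l + 1 + l) (by rw [← h1]; ring)

theorem qint_ne_zero (l : ℕ) : qint l ≠ 0 :=
  div_ne_zero (qq_sub_inv_ne_zero l) (by simpa using qq_sub_inv_ne_zero 0)

theorem field_geom_sum {K : Type*} [Field K] (q : K) (h0 : q ≠ 0) (h1 : q ^ 2 - 1 ≠ 0) (l : ℕ) :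
    ((q ^ 2) ^ (l+1) - 1) / (q ^ 2 - 1) =
      q ^ l * ((q ^ (l+1) - (q⁻¹) ^ (l+1)) / (q - q⁻¹)) := by
  have e : q - q⁻¹ = (q ^ 2 - 1) / q := by field_simp
  rw [e, inv_pow]
  field_simp
  ring

theorem sum_sq_pow (l : ℕ) : ∑ s ∈ Finset.range (l+1), (qq ^ 2) ^ s = qq ^ l * qint l := by
  have h0 := qq_ne_zero
  have h1 : qq ^ 2 ≠ 1 := qq_pow_ne_one 1
  have h2 : qq ^ 2 - 1 ≠ 0 := sub_ne_zero.mpr h1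
  rw [geom_sum_eq h1, qint]
  exact field_geom_sum qq h0 h2 l

theorem sum_inv_sq_pow (l : ℕ) :
    ∑ s ∈ Finset.range (l+1), ((qq⁻¹) ^ 2) ^ s = (qq⁻¹) ^ l * qint l := by
  have h0 := qq_ne_zero
  have e : (qq⁻¹) ^ l * qint l = ((qq⁻¹) ^ 2) ^ l * ∑ s ∈ Finset.range (l+1), (qq ^ 2) ^ s := by
    rw [sum_sq_pow, ← mul_assoc, ← pow_mul, mul_comm 2, pow_mul, sq, mul_assoc ((qq⁻¹) ^ l),
      ← mul_pow, inv_mul_cancel₀ h0, one_pow, mul_one]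
  rw [e, ← Finset.sum_range_reflect, Finset.mul_sum]
  refine Finset.sum_congr rfl fun s hs => ?_
  have hs' := Finset.mem_range.mp hs
  obtain ⟨r, hr⟩ : ∃ r, l = r + s := ⟨l - s, by omega⟩
  rw [show l + 1 - 1 - s = r by omega, hr, pow_add, mul_assoc, ← mul_pow, ← mul_pow, inv_mul_cancel₀ h0, one_pow,
    one_pow, mul_one]

/-! ### Iterates of the Chevalley generators -/

theorem shift_step (c d : ℕ → Fq) (t : Fq) (hcd : ∀ n, c (n+1) * d (n+1) = -(1 + t ^ (n+1)))
    (a : Fq) (k : ℕ) (b : ℤ) :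
    (shiftHom d (a • hankelDet (extZ (genFamF c)) (b + 2) k)).sum
        (fun j p => extZ (genFamF c) (b + j) * p) =
      (a * ∑ s ∈ Finset.range (k + 1), t ^ s) • hankelDet (extZ (genFamF c)) b (k + 1) := by
  have h := hankel_step (shiftHom d) (extZ (genFamF c)) (C t)
    (fun n => shiftHom_extZ c d t hcd n) k b
  have e : ∀ P : Polynomial LamF, (a • P).sum (fun j p => extZ (genFamF c) (b + j) * p) =
      a • P.sum (fun j p => extZ (genFamF c) (b + j) * p) := by
    intro P
    rw [Polynomial.sum_smul_index' _ _ _ (by simp), Polynomial.smul_sum]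
    simp only [mul_smul_comm]
  rw [map_smul, e, h, mul_smul, smul_eq_C_mul _ (∑ s ∈ Finset.range (k + 1), t ^ s), map_sum]
  simp only [map_pow]

theorem chf1_iterate (i M : ℤ) (x : Fq) (k : ℕ) :
    (chf1 i)^[k] (x • Finsupp.single M (1 : LamF)) = Finsupp.single (M - k)
      ((x * ∏ l ∈ Finset.range k, qq ^ l * qint l) • hankelDet HZm (2*M + i + 1 - 2*k) k) := by
  induction k with
  | zero => simp [hankelDet]
  | succ k ih =>
    rw [Function.iterate_succ_apply', ih, chf1, Xm_single, Finset.prod_range_succ, ← mul_assoc,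
      ← sum_sq_pow]
    have h := shift_step (fun n => -(1 + qq ^ (2*n))) (fun _ => 1) (qq ^ 2)
      (fun n => by rw [mul_one, pow_mul]) (x * ∏ l ∈ Finset.range k, qq ^ l * qint l) k
      (2*M + i + 1 - 2*(k + 1 : ℕ))
    have e1 : 2*M + i + 1 - 2*((k + 1 : ℕ) : ℤ) + 2 = 2*M + i + 1 - 2*k := by push_cast; ring
    rw [e1] at h
    have e2 : M - (k : ℤ) - 1 = M - (k + 1 : ℕ) := by push_cast; ring
    have e3 : ∀ j : ℕ, (j : ℤ) + 2*(M - k) + i - 0 - 1 = 2*M + i + 1 - 2*(k + 1 : ℕ) + j := by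
      intro j; push_cast; ring
    simp only [e3]
    rw [e2]
    exact congrArg _ h

theorem qd_single (i ε m : ℤ) (P : LamF) :
    qd i ε (Finsupp.single m P) = Finsupp.single m (qq ^ (ε * (2*m + i)) • P) := by
  rw [qd, Finsupp.sum_single_index]
  simp

theorem chf0_iterate (i M : ℤ) (x : Fq) (k : ℕ) :
    (chf0 i)^[k] (x • Finsupp.single M (1 : LamF)) = Finsupp.single (M + k)
      ((x * ∏ l ∈ Finset.range k, qq ^ (2*(M + l + 1) + i) * ((qq⁻¹) ^ l * qint l)) •
        hankelDet HZp (2 - 2*M - i - 2*k) k) := by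
  induction k with
  | zero => simp [hankelDet]
  | succ k ih =>
    rw [Function.iterate_succ_apply', ih, chf0, Xp_single, qd_single, Finset.prod_range_succ]
    have h := shift_step (fun n => (1 + qq ^ (2*n)) * (qq⁻¹) ^ n) (fun n => -((qq⁻¹) ^ n))
      ((qq⁻¹) ^ 2)
      (fun n => by
        have h0 := qq_ne_zero
        have h1 : qq ^ (2*(n+1)) * ((qq⁻¹) ^ 2) ^ (n+1) = 1 := by
          rw [pow_mul, ← mul_pow, ← mul_pow, mul_inv_cancel₀ h0, one_pow, one_pow]
        linear_combination -h1)
      (x * ∏ l ∈ Finset.range k, qq ^ (2*(M + l + 1) + i) * ((qq⁻¹) ^ l * qint l)) k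
      (2 - 2*M - i - 2*(k + 1 : ℕ))
    have e1 : 2 - 2*M - i - 2*((k + 1 : ℕ) : ℤ) + 2 = 2 - 2*M - i - 2*k := by push_cast; ring
    rw [e1] at h
    have e2 : M + (k : ℤ) + 1 = M + (k + 1 : ℕ) := by push_cast; ring
    have e3 : ∀ j : ℕ, (j : ℤ) - -1 - 1 - 2*(M + k) - i = 2 - 2*M - i - 2*(k + 1 : ℕ) + j := by
      intro j; push_cast; ring
    simp only [e3]
    rw [e2]
    refine congrArg _ ((congrArg _ h).trans ?_)
    rw [smul_smul, sum_inv_sq_pow, one_mul]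
    congr 1
    ring

theorem extZ_zero (c : ℕ → Fq) : extZ (genFamF c) 0 = 1 := by
  simp [extZ, genFamF]

theorem extZ_neg (g : ℕ → LamF) (n : ℤ) (hn : n < 0) : extZ g n = 0 :=
  if_neg (by omega)

theorem qfact_eq (r : ℕ) : qfact r = ∏ l ∈ Finset.range r, qint l := rfl

theorem qfact_ne_zero (r : ℕ) : qfact r ≠ 0 :=
  Finset.prod_ne_zero_iff.mpr fun l _ => qint_ne_zero l

theorem smul_prod_sign (a : Fq) (r : ℕ) :
    a • ∏ l ∈ Finset.range r, (-1 : LamF) ^ l = (a * ∏ l ∈ Finset.range r, (-1 : Fq) ^ l) • 1 := by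
  rw [mul_smul, smul_eq_C_mul (1 : LamF) (∏ l ∈ Finset.range r, (-1 : Fq) ^ l), map_prod]
  simp

/-- The exponent `∑_{l<r} l` is `r(r-1)/2`. -/
theorem divpow_chf1 (i M : ℤ) (x : Fq) (r : ℕ) (hr : (r : ℤ) = 2*M + i) :
    divpow (chf1 i) r (x • Finsupp.single M (1 : LamF)) =
      (x * (-qq) ^ (∑ l ∈ Finset.range r, l)) • Finsupp.single (M - r) (1 : LamF) := by
  rw [divpow, chf1_iterate, show 2*M + i + 1 - 2*(r : ℤ) = 1 - r by omega,
    show hankelDet HZm (1 - r) r = _ from hankelDet_triangular HZm (extZ_zero _) (extZ_neg _) r,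
    smul_prod_sign, Finsupp.smul_single, smul_smul, Finsupp.smul_single,
    ← Finset.prod_pow_eq_pow_sum]
  congr 2
  simp only [neg_pow qq, Finset.prod_mul_distrib, ← qfact_eq]
  have := qfact_ne_zero r
  field_simp

theorem divpow_chf0 (i M : ℤ) (x : Fq) (r : ℕ) (hr : (r : ℤ) = 1 - 2*M - i) :
    divpow (chf0 i) r (x • Finsupp.single M (1 : LamF)) =
      (x * (qq ^ (2*r) * (-(qq⁻¹)) ^ (∑ l ∈ Finset.range r, l))) •
        Finsupp.single (M + r) (1 : LamF) := by
  have hprod : ∏ l ∈ Finset.range r, qq ^ (2*(M + l + 1) + i) = qq ^ (2*r) := by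
    have h : ∀ k : ℕ, ∏ l ∈ Finset.range k, qq ^ (2*(M + l + 1) + i) =
        qq ^ ((k : ℤ) * (2*M + i + 1 + k)) := by
      intro k
      induction k with
      | zero => simp
      | succ k ih =>
        rw [Finset.prod_range_succ, ih, ← zpow_add₀ qq_ne_zero]
        congr 1
        push_cast
        ring
    rw [h, show 2*M + i + 1 + (r : ℤ) = 2 by omega, ← zpow_natCast]
    congr 1
    push_cast
    ring
  rw [divpow, chf0_iterate, show 2 - 2*M - i - 2*(r : ℤ) = 1 - r by omega,
    show hankelDet HZp (1 - r) r = _ from hankelDet_triangular HZp (extZ_zero _) (extZ_neg _) r,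
    smul_prod_sign, Finsupp.smul_single, smul_smul, Finsupp.smul_single,
    ← Finset.prod_pow_eq_pow_sum]
  congr 2
  simp only [neg_pow (qq⁻¹), Finset.prod_mul_distrib, ← qfact_eq, hprod]
  have := qfact_ne_zero r
  field_simp

/-! ### The alternating chains -/

theorem sum_range_even (m : ℕ) : ∑ l ∈ Finset.range (2*m+2), l = (m+1) * (2*m+1) := by
  have h := Finset.sum_range_id_mul_two (2*m+2)
  rw [show 2*m+2-1 = 2*m+1 by omega] at h
  nlinarith

theorem sum_range_odd (m : ℕ) : ∑ l ∈ Finset.range (2*m+1), l = m * (2*m+1) := by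
  have h := Finset.sum_range_id_mul_two (2*m+1)
  rw [show 2*m+1-1 = 2*m by omega] at h
  nlinarith

theorem neg_qq_pow (m n : ℕ) : (-qq) ^ (m * (2*n+1)) = (-1) ^ m * qq ^ ((m : ℤ) * (2*n+1)) := by
  rw [neg_pow, mul_comm m, pow_mul, Odd.neg_one_pow ⟨n, rfl⟩, ← zpow_natCast qq]
  push_cast
  rw [mul_comm (m : ℤ)]

theorem neg_qq_inv_pow (m n : ℕ) :
    (-(qq⁻¹)) ^ (m * (2*n+1)) = (-1) ^ m * qq ^ (-((m : ℤ) * (2*n+1))) := by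
  rw [neg_pow, mul_comm m, pow_mul, Odd.neg_one_pow ⟨n, rfl⟩, inv_pow, ← zpow_natCast qq, zpow_neg]
  push_cast
  rw [mul_comm (m : ℤ)]

theorem chainW0_even_odd (m : ℕ) :
    chainW0 (2*m) = ((-1 : Fq) ^ m * qq ^ (3 * (m : ℤ)^2)) • Finsupp.single (-(m : ℤ)) (1 : LamF) ∧
    chainW0 (2*m+1) =
      qq ^ (((m : ℤ) + 1) * ((m : ℤ) + 2)) • Finsupp.single ((m : ℤ) + 1) (1 : LamF) := by
  have hstep : ∀ m : ℕ, chainW0 (2*m) =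
      ((-1 : Fq) ^ m * qq ^ (3 * (m : ℤ)^2)) • Finsupp.single (-(m : ℤ)) (1 : LamF) →
      chainW0 (2*m+1) =
        qq ^ (((m : ℤ) + 1) * ((m : ℤ) + 2)) • Finsupp.single ((m : ℤ) + 1) (1 : LamF) := by
    intro m h
    rw [chainW0, if_neg (by omega), h, divpow_chf0 0 _ _ _ (by push_cast; ring), sum_range_odd,
      neg_qq_inv_pow]
    have hs : ((-1 : Fq) ^ m) * (-1) ^ m = 1 := by rw [← mul_pow]; simp
    congr 1
    · rw [← zpow_natCast qq, show ∀ a b c s : Fq, s * a * (b * (s * c)) = s * s * (a * b * c) from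
        fun a b c s => by ring, hs, one_mul, ← zpow_add₀ qq_ne_zero, ← zpow_add₀ qq_ne_zero]
      congr 1
      push_cast
      ring
    · congr 1
      push_cast
      ring
  induction m with
  | zero =>
    have h : chainW0 (2*0) = ((-1 : Fq) ^ 0 * qq ^ (3 * ((0 : ℕ) : ℤ)^2)) •
        Finsupp.single (-((0 : ℕ) : ℤ)) (1 : LamF) := by simp [chainW0]
    exact ⟨h, hstep 0 h⟩
  | succ m ih =>
    have h : chainW0 (2*(m+1)) = ((-1 : Fq) ^ (m+1) * qq ^ (3 * ((m+1 : ℕ) : ℤ)^2)) •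
        Finsupp.single (-((m+1 : ℕ) : ℤ)) (1 : LamF) := by
      rw [show 2*(m+1) = 2*m+1+1 by ring, chainW0, if_pos (by omega), ih.2,
        divpow_chf1 0 _ _ _ (by push_cast; ring), sum_range_even, neg_qq_pow]
      congr 1
      · rw [mul_left_comm, ← zpow_add₀ qq_ne_zero]
        congr 2
        push_cast
        ring
      · congr 1
        push_cast
        ring
    exact ⟨h, hstep (m+1) h⟩

theorem chainW1_even_odd (m : ℕ) :
    chainW1 (2*m) = ((-1 : Fq) ^ m * qq ^ ((m : ℤ) * ((m : ℤ) + 2))) •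
      Finsupp.single (m : ℤ) (1 : LamF) ∧
    chainW1 (2*m+1) =
      qq ^ (3 * (m : ℤ) * ((m : ℤ) + 1)) • Finsupp.single (-((m : ℤ) + 1)) (1 : LamF) := by
  have hstep : ∀ m : ℕ, chainW1 (2*m) =
      ((-1 : Fq) ^ m * qq ^ ((m : ℤ) * ((m : ℤ) + 2))) • Finsupp.single (m : ℤ) (1 : LamF) →
      chainW1 (2*m+1) =
        qq ^ (3 * (m : ℤ) * ((m : ℤ) + 1)) • Finsupp.single (-((m : ℤ) + 1)) (1 : LamF) := by
    intro m h
    rw [chainW1, if_neg (by omega), h, divpow_chf1 1 _ _ _ (by push_cast; ring), sum_range_odd,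
      neg_qq_pow]
    have hs : ((-1 : Fq) ^ m) * (-1) ^ m = 1 := by rw [← mul_pow]; simp
    congr 1
    · rw [mul_mul_mul_comm, hs, one_mul, ← zpow_add₀ qq_ne_zero]
      congr 1
      ring
    · congr 1
      push_cast
      ring
  induction m with
  | zero =>
    have h : chainW1 (2*0) = ((-1 : Fq) ^ 0 * qq ^ (((0 : ℕ) : ℤ) * (((0 : ℕ) : ℤ) + 2))) •
        Finsupp.single ((0 : ℕ) : ℤ) (1 : LamF) := by simp [chainW1]
    exact ⟨h, hstep 0 h⟩
  | succ m ih =>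
    have h : chainW1 (2*(m+1)) = ((-1 : Fq) ^ (m+1) *
        qq ^ (((m+1 : ℕ) : ℤ) * (((m+1 : ℕ) : ℤ) + 2))) •
        Finsupp.single ((m+1 : ℕ) : ℤ) (1 : LamF) := by
      rw [show 2*(m+1) = 2*m+1+1 by ring, chainW1, if_pos (by omega), ih.2,
        divpow_chf0 1 _ _ _ (by push_cast; ring), sum_range_even, neg_qq_inv_pow]
      congr 1
      · rw [← zpow_natCast qq, show ∀ a b c s : Fq, a * (b * (s * c)) = s * (a * b * c) from
          fun a b c s => by ring, ← zpow_add₀ qq_ne_zero, ← zpow_add₀ qq_ne_zero]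
        congr 2
        push_cast
        ring
      · congr 1
        push_cast
        ring
    exact ⟨h, hstep (m+1) h⟩

/-- highest-weight-vector monomials in divided powers of `f₀, f₁`:
(1) in `W₀`: for `m ≥ 1`, `f₁^{(2m)} f₀^{(2m−1)} ⋯ f₁^{(2)} f₀^{(1)} (1⊗e^{0α}) = (−1)^m q^{3m²} e^{−mα}`,
    and for `m ≥ 0`, `f₀^{(2m+1)} f₁^{(2m)} ⋯ f₁^{(2)} f₀^{(1)} (1⊗e^{0α}) = q^{(m+1)(m+2)} e^{(m+1)α}`;
(2) in `W₁`: for `m ≥ 1`, `f₀^{(2m)} f₁^{(2m−1)} ⋯ f₀^{(2)} f₁^{(1)} (1⊗e^{0α}e^{α/2}) = (−1)^m q^{m(m+2)} e^{mα}e^{α/2}`,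
    and for `m ≥ 0`, `f₁^{(2m+1)} f₀^{(2m)} ⋯ f₀^{(2)} f₁^{(1)} (1⊗e^{0α}e^{α/2}) = q^{3m(m+1)} e^{−(m+1)α}e^{α/2}`. -/
theorem highest_weight_monomials (m : ℕ) :
    (1 ≤ m → chainW0 (2*m)
      = ((-1 : Fq)) ^ m • qq ^ (3 * (m : ℤ)^2) • Finsupp.single (-(m : ℤ)) (1 : LamF)) ∧
    (chainW0 (2*m+1)
      = qq ^ (((m : ℤ) + 1) * ((m : ℤ) + 2)) • Finsupp.single ((m : ℤ) + 1) (1 : LamF)) ∧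
    (1 ≤ m → chainW1 (2*m)
      = ((-1 : Fq)) ^ m • qq ^ ((m : ℤ) * ((m : ℤ) + 2)) • Finsupp.single ((m : ℤ)) (1 : LamF)) ∧
    (chainW1 (2*m+1)
      = qq ^ (3 * (m : ℤ) * ((m : ℤ) + 1)) • Finsupp.single (-((m : ℤ) + 1)) (1 : LamF)) := by
  simp only [smul_smul]
  exact ⟨fun _ => (chainW0_even_odd m).1, (chainW0_even_odd m).2,
    fun _ => (chainW1_even_odd m).1, (chainW1_even_odd m).2⟩
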